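/- Let ρ > 0 and σ > 0, define m(λ) = ρσ · ∫_0^∞ ln(1 + sinh²(λ/(2ρ))·erfc(η)·erfc(−η)) dη and φ_q(ξ) = sup_{λ∈ℝ} (λξ − m(λ)). Then lim_{ξ→∞} φ_q(ξ)/ξ³ = ρ/(3σ²). -/

import Mathlib

open MeasureTheory Real Filter Topology

/-- The complementary error function `erfc(x) = (2/√π) ∫_x^∞ e^{−u²} du`. -/
noncomputable def erfc (x : ℝ) : ℝ := (2 / Real.sqrt π) * ∫ u in Set.Ioi x, Real.exp (-u ^ 2)

/-- The quenched cumulant generating function per unit `√t`: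
`m(λ) = ρσ ∫_0^∞ ln(1 + sinh²(λ/(2ρ))·erfc(η)·erfc(−η)) dη`. -/
noncomputable def mq (ρ σ l : ℝ) : ℝ :=
  ρ * σ * ∫ η in Set.Ioi (0 : ℝ),
    Real.log (1 + Real.sinh (l / (2 * ρ)) ^ 2 * erfc η * erfc (-η))

/-- The quenched large deviation function `φ_q(ξ) = sup_λ (λξ − m(λ))`. -/
noncomputable def φq (ρ σ ξ : ℝ) : ℝ := ⨆ l : ℝ, (l * ξ - mq ρ σ l)

lemma gi : Integrable (fun u : ℝ => Real.exp (-u ^ 2)) := by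
  simpa using integrable_exp_neg_mul_sq (b := 1) one_pos

lemma gint : ∫ u : ℝ, Real.exp (-u ^ 2) = Real.sqrt π := by
  simpa using integral_gaussian 1

lemma gint0 : ∫ u in Set.Ioi (0:ℝ), Real.exp (-u ^ 2) = Real.sqrt π / 2 := by
  simpa using integral_gaussian_Ioi 1

lemma sqrtpi_pos : 0 < Real.sqrt π := Real.sqrt_pos.2 Real.pi_pos

lemma erfc_nonneg (x : ℝ) : 0 ≤ erfc x := by
  unfold erfc
  have : 0 ≤ ∫ u in Set.Ioi x, Real.exp (-u ^ 2) := integral_nonneg fun u => (Real.exp_pos _).le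
  positivity

lemma erfc_anti : Antitone erfc := by
  intro x y h
  unfold erfc
  have := sqrtpi_pos
  refine mul_le_mul_of_nonneg_left ?_ (by positivity)
  exact setIntegral_mono_set gi.integrableOn (ae_of_all _ fun u => (Real.exp_pos _).le)
    (LE.le.eventuallyLE (Set.Ioi_subset_Ioi h))

lemma erfc_zero : erfc 0 = 1 := by
  unfold erfc
  rw [gint0]
  have := sqrtpi_pos
  field_simp

lemma erfc_le_two (x : ℝ) : erfc x ≤ 2 := by
  unfold erfc
  have h := setIntegral_le_integral (s := Set.Ioi x) gi (ae_of_all _ fun u => (Real.exp_pos _).le)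
  rw [gint] at h
  have := sqrtpi_pos
  calc _ ≤ 2 / Real.sqrt π * Real.sqrt π := mul_le_mul_of_nonneg_left h (by positivity)
    _ = 2 := by field_simp

lemma erfc_le (x : ℝ) (hx : 0 ≤ x) : erfc x ≤ Real.exp (-x ^ 2) := by
  have h1 : ∫ u in Set.Ioi x, Real.exp (-u ^ 2) = ∫ v in Set.Ioi (0:ℝ), Real.exp (-(v + x) ^ 2) := by
    have := (measurePreserving_add_right (volume : Measure ℝ) x).setIntegral_preimage_emb
      (measurableEmbedding_addRight x) (fun u : ℝ => Real.exp (-u ^ 2)) (Set.Ioi x)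
    simpa using this.symm
  have h2 : ∫ v in Set.Ioi (0:ℝ), Real.exp (-(v + x) ^ 2)
      ≤ ∫ v in Set.Ioi (0:ℝ), Real.exp (-x ^ 2) * Real.exp (-v ^ 2) := by
    refine setIntegral_mono_on (gi.comp_add_right x).integrableOn
      (gi.const_mul _).integrableOn measurableSet_Ioi ?_
    intro v hv
    rw [← Real.exp_add]
    apply Real.exp_le_exp.2
    have : 0 ≤ v * x := mul_nonneg (le_of_lt hv) hx
    nlinarith
  rw [integral_const_mul, gint0] at h2
  unfold erfc
  rw [h1]
  have := sqrtpi_pos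
  calc _ ≤ 2 / Real.sqrt π * (Real.exp (-x ^ 2) * (Real.sqrt π / 2)) :=
        mul_le_mul_of_nonneg_left h2 (by positivity)
    _ = _ := by field_simp

lemma erfc_ge (x : ℝ) (hx : 0 ≤ x) : 2 / Real.sqrt π * Real.exp (-(x + 1) ^ 2) ≤ erfc x := by
  unfold erfc
  have := sqrtpi_pos
  refine mul_le_mul_of_nonneg_left ?_ (by positivity)
  calc Real.exp (-(x + 1) ^ 2) = ∫ u in Set.Ioc x (x + 1), Real.exp (-(x + 1) ^ 2) := by
        simp
    _ ≤ ∫ u in Set.Ioc x (x + 1), Real.exp (-u ^ 2) := by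
        refine setIntegral_mono_on (by simp) gi.integrableOn measurableSet_Ioc ?_
        intro u hu
        apply Real.exp_le_exp.2
        have := hu.1
        have := hu.2
        nlinarith
    _ ≤ _ := setIntegral_mono_set gi.integrableOn (ae_of_all _ fun u => (Real.exp_pos _).le)
        (LE.le.eventuallyLE Set.Ioc_subset_Ioi_self)

lemma arg_nonneg (z η : ℝ) : 0 ≤ Real.sinh z ^ 2 * erfc η * erfc (-η) :=
  mul_nonneg (mul_nonneg (sq_nonneg _) (erfc_nonneg _)) (erfc_nonneg _)

lemma log_nn (z η : ℝ) : 0 ≤ Real.log (1 + Real.sinh z ^ 2 * erfc η * erfc (-η)) :=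
  Real.log_nonneg (by linarith [arg_nonneg z η])

lemma arg_le (z η : ℝ) (hη : 0 ≤ η) :
    Real.sinh z ^ 2 * erfc η * erfc (-η) ≤ Real.sinh z ^ 2 * 2 * Real.exp (-η ^ 2) := by
  have h1 := erfc_le η hη
  have h2 := erfc_le_two (-η)
  calc _ ≤ Real.sinh z ^ 2 * Real.exp (-η ^ 2) * 2 :=
        mul_le_mul (mul_le_mul_of_nonneg_left h1 (sq_nonneg _)) h2 (erfc_nonneg _) (by positivity)
    _ = _ := by ring

lemma log_one_add_le (x : ℝ) (hx : 0 ≤ x) : Real.log (1 + x) ≤ x := by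
  have := Real.log_le_sub_one_of_pos (x := 1 + x) (by linarith)
  linarith

lemma integ (z : ℝ) : IntegrableOn
    (fun η => Real.log (1 + Real.sinh z ^ 2 * erfc η * erfc (-η))) (Set.Ioi 0) := by
  refine Integrable.mono' ((gi.const_mul (Real.sinh z ^ 2 * 2)).integrableOn) ?_ ?_
  · have hm := erfc_anti.measurable
    have : Measurable (fun η => Real.log (1 + Real.sinh z ^ 2 * erfc η * erfc (-η))) :=
      Real.measurable_log.comp
        (((hm.const_mul _).mul (hm.comp measurable_neg)).const_add 1)
    exact this.aestronglyMeasurable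
  · filter_upwards [ae_restrict_mem measurableSet_Ioi] with η hη
    rw [Real.norm_of_nonneg (log_nn z η)]
    exact (log_one_add_le _ (arg_nonneg z η)).trans (arg_le z η (le_of_lt hη))

lemma sinh_sq_ge (z : ℝ) : (Real.exp (2 * |z|) - 2) / 4 ≤ Real.sinh z ^ 2 := by
  have h : Real.sinh z ^ 2 = Real.sinh |z| ^ 2 := by
    rcases abs_choice z with h | h <;> rw [h]
    rw [Real.sinh_neg]; ring
  rw [h, Real.sinh_eq, two_mul, Real.exp_add]
  have : Real.exp |z| * Real.exp (-|z|) = 1 := by rw [← Real.exp_add]; simp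
  nlinarith [sq_nonneg (Real.exp (-|z|))]

lemma sinh_sq_le (z : ℝ) (hz : 0 ≤ z) : Real.sinh z ^ 2 ≤ Real.exp (2 * z) / 4 := by
  have h0 : 0 ≤ Real.sinh z := Real.sinh_nonneg_iff.2 hz
  have h1 : Real.sinh z ≤ Real.exp z / 2 := by
    rw [Real.sinh_eq]; linarith [Real.exp_pos (-z)]
  rw [two_mul, Real.exp_add]
  nlinarith

lemma lower (z T : ℝ) (hT : 0 ≤ T) :
    T * (2 * |z|) - ((T + 1) ^ 3 - 1) / 3 + Real.log (1 / (2 * Real.sqrt π)) * T ≤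
    ∫ η in Set.Ioi (0 : ℝ), Real.log (1 + Real.sinh z ^ 2 * erfc η * erfc (-η)) := by
  set c : ℝ := 1 / (2 * Real.sqrt π) with hc
  have hp := sqrtpi_pos
  have hp1 : 1 ≤ Real.sqrt π := by
    rw [Real.one_le_sqrt]; linarith [Real.pi_gt_three]
  have hc0 : 0 < c := by positivity
  have hc1 : c ≤ 1 / 2 := by
    rw [hc]; apply one_div_le_one_div_of_le <;> linarith
  have key : ∀ η, 0 ≤ η → Real.log c + 2 * |z| - (η + 1) ^ 2 ≤
      Real.log (1 + Real.sinh z ^ 2 * erfc η * erfc (-η)) := by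
    intro η hη
    have e1 : 1 ≤ erfc (-η) := by
      rw [← erfc_zero]; exact erfc_anti (by linarith)
    have e2 := erfc_ge η hη
    have e3 : Real.sinh z ^ 2 * (4 * c * Real.exp (-(η + 1) ^ 2)) ≤
        Real.sinh z ^ 2 * erfc η * erfc (-η) := by
      have : 4 * c = 2 / Real.sqrt π := by rw [hc]; field_simp; norm_num
      rw [this]
      calc _ ≤ Real.sinh z ^ 2 * erfc η := mul_le_mul_of_nonneg_left e2 (sq_nonneg _)
        _ ≤ _ := le_mul_of_one_le_right (mul_nonneg (sq_nonneg _) (erfc_nonneg _)) e1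
    have e4 : (Real.exp (2 * |z|) - 2) / 4 * (4 * c * Real.exp (-(η + 1) ^ 2)) ≤
        Real.sinh z ^ 2 * (4 * c * Real.exp (-(η + 1) ^ 2)) :=
      mul_le_mul_of_nonneg_right (sinh_sq_ge z) (by positivity)
    have e5 : Real.exp (-(η + 1) ^ 2) ≤ 1 := Real.exp_le_one_iff.2 (by nlinarith)
    have e6 : c * Real.exp (-(η + 1) ^ 2) ≤ 1 / 2 := by
      nlinarith [Real.exp_pos (-(η + 1) ^ 2)]
    have e7 : Real.exp (Real.log c + 2 * |z| - (η + 1) ^ 2) =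
        c * Real.exp (2 * |z|) * Real.exp (-(η + 1) ^ 2) := by
      rw [sub_eq_add_neg, Real.exp_add, Real.exp_add, Real.exp_log hc0]
    rw [Real.le_log_iff_exp_le (by linarith [arg_nonneg z η]), e7]
    nlinarith
  calc _ = ∫ η in (0:ℝ)..T, (Real.log c + 2 * |z| - (η + 1) ^ 2) := by
        rw [intervalIntegral.integral_sub (by simp)
          (Continuous.intervalIntegrable (by fun_prop) _ _),
          intervalIntegral.integral_comp_add_right (fun x : ℝ => x ^ 2)]
        simp [integral_pow]
        ring
    _ = ∫ η in Set.Ioc (0:ℝ) T, (Real.log c + 2 * |z| - (η + 1) ^ 2) :=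
        intervalIntegral.integral_of_le hT
    _ ≤ ∫ η in Set.Ioc (0:ℝ) T, Real.log (1 + Real.sinh z ^ 2 * erfc η * erfc (-η)) := by
        refine setIntegral_mono_on ?_ ((integ z).mono_set Set.Ioc_subset_Ioi_self)
          measurableSet_Ioc ?_
        · exact (Continuous.integrableOn_Ioc (by fun_prop))
        · intro η hη
          exact key η hη.1.le
    _ ≤ _ := setIntegral_mono_set (integ z) (ae_of_all _ fun u => log_nn z u)
        (LE.le.eventuallyLE Set.Ioc_subset_Ioi_self)

lemma upper (s : ℝ) (hs : 0 ≤ s) :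
    ∫ η in Set.Ioi (0 : ℝ), Real.log (1 + Real.sinh (s ^ 2 / 2) ^ 2 * erfc η * erfc (-η)) ≤
      2 / 3 * s ^ 3 + s + Real.sqrt π := by
  set f := fun η : ℝ => Real.log (1 + Real.sinh (s ^ 2 / 2) ^ 2 * erfc η * erfc (-η)) with hf
  have hle : ∀ η, 0 ≤ η → Real.sinh (s ^ 2 / 2) ^ 2 * erfc η * erfc (-η) ≤
      Real.exp (s ^ 2 - η ^ 2) := by
    intro η hη
    refine (arg_le _ η hη).trans ?_
    have := sinh_sq_le (s ^ 2 / 2) (by positivity)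
    rw [mul_div_cancel₀ _ (two_ne_zero)] at this
    rw [sub_eq_add_neg, Real.exp_add]
    refine mul_le_mul_of_nonneg_right ?_ (Real.exp_pos _).le
    linarith [Real.exp_pos (s ^ 2)]
  have hsplit : ∫ η in Set.Ioi (0 : ℝ), f η = (∫ η in Set.Ioc 0 s, f η) + ∫ η in Set.Ioi s, f η := by
    rw [← setIntegral_union (by simp) measurableSet_Ioi
      ((integ _).mono_set Set.Ioc_subset_Ioi_self)
      ((integ _).mono_set (Set.Ioi_subset_Ioi hs)), Set.Ioc_union_Ioi_eq_Ioi hs]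
  have h1 : ∫ η in Set.Ioc 0 s, f η ≤ 2 / 3 * s ^ 3 + s := by
    calc _ ≤ ∫ η in Set.Ioc 0 s, (s ^ 2 + 1 - η ^ 2) := by
          refine setIntegral_mono_on ((integ _).mono_set Set.Ioc_subset_Ioi_self)
            (Continuous.integrableOn_Ioc (by fun_prop)) measurableSet_Ioc ?_
          intro η hη
          have hy : 0 ≤ s ^ 2 - η ^ 2 := by nlinarith [hη.1, hη.2]
          have h1y := Real.one_le_exp hy
          have h2e : (2:ℝ) ≤ Real.exp 1 := by linarith [Real.add_one_le_exp (1:ℝ)]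
          have : s ^ 2 + 1 - η ^ 2 = (s ^ 2 - η ^ 2) + 1 := by ring
          rw [this]
          apply (Real.log_le_iff_le_exp (by linarith [arg_nonneg (s ^ 2 / 2) η])).2
          rw [Real.exp_add]
          nlinarith [hle η hη.1.le]
      _ = ∫ η in (0:ℝ)..s, (s ^ 2 + 1 - η ^ 2) := (intervalIntegral.integral_of_le hs).symm
      _ = _ := by
          rw [intervalIntegral.integral_sub (by simp)
            (Continuous.intervalIntegrable (by fun_prop) _ _)]
          simp [integral_pow]
          ring
  have h2 : ∫ η in Set.Ioi s, f η ≤ Real.sqrt π := by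
    calc _ ≤ ∫ η in Set.Ioi s, Real.exp (-(η - s) ^ 2) := by
          refine setIntegral_mono_on ((integ _).mono_set (Set.Ioi_subset_Ioi hs))
            (gi.comp_sub_right s).integrableOn measurableSet_Ioi ?_
          intro η hη
          have hη' : s < η := hη
          refine (log_one_add_le _ (arg_nonneg _ η)).trans ((hle η (by linarith)).trans ?_)
          apply Real.exp_le_exp.2
          nlinarith
      _ ≤ ∫ η, Real.exp (-(η - s) ^ 2) := setIntegral_le_integral (gi.comp_sub_right s)
          (ae_of_all _ fun u => (Real.exp_pos _).le)
      _ = _ := by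
          rw [integral_sub_right_eq_self (fun u : ℝ => Real.exp (-u ^ 2)) s, gint]
  rw [hsplit]
  linarith

lemma ub (ρ σ : ℝ) (hρ : 0 < ρ) (hσ : 0 < σ) (T : ℝ) (hT : 0 ≤ T) (l : ℝ) :
    l * (σ * T) - mq ρ σ l ≤
      ρ * σ * (((T + 1) ^ 3 - 1) / 3 - Real.log (1 / (2 * Real.sqrt π)) * T) := by
  have h := mul_le_mul_of_nonneg_left (lower (l / (2 * ρ)) T hT) (mul_pos hρ hσ).le
  have e : |l / (2 * ρ)| = |l| / (2 * ρ) := by rw [abs_div, abs_of_pos (by positivity : 0 < 2 * ρ)]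
  rw [e] at h
  have e2 : ρ * σ * (T * (2 * (|l| / (2 * ρ)))) = |l| * (σ * T) := by field_simp
  have e3 : l * (σ * T) ≤ |l| * (σ * T) := mul_le_mul_of_nonneg_right (le_abs_self l) (by positivity)
  unfold mq
  linarith

/-- `lim_{ξ→∞} φ_q(ξ)/ξ³ = ρ/(3σ²)`. -/
theorem quenched_ldf_tail (ρ σ : ℝ) (hρ : 0 < ρ) (hσ : 0 < σ) :
    Tendsto (fun ξ : ℝ => φq ρ σ ξ / ξ ^ 3) atTop (nhds (ρ / (3 * σ ^ 2))) := by
  set K := Real.log (1 / (2 * Real.sqrt π)) with hK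
  have hi : Tendsto (fun ξ : ℝ => σ * ξ⁻¹) atTop (nhds 0) := by
    simpa using tendsto_inv_atTop_zero.const_mul σ
  have hU : Tendsto (fun ξ : ℝ => ρ / σ ^ 2 * (((1 + σ * ξ⁻¹) ^ 3 - (σ * ξ⁻¹) ^ 3) / 3
      - K * (σ * ξ⁻¹) ^ 2)) atTop (nhds (ρ / (3 * σ ^ 2))) := by
    have hc : Continuous (fun x : ℝ => ρ / σ ^ 2 * (((1 + x) ^ 3 - x ^ 3) / 3 - K * x ^ 2)) := by
      fun_prop
    have := (hc.tendsto 0).comp hi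
    have e : ρ / (3 * σ ^ 2) = ρ / σ ^ 2 * (((1 + 0) ^ 3 - 0 ^ 3) / 3 - K * 0 ^ 2) := by
      field_simp
      ring
    rw [e]
    exact this
  have hL : Tendsto (fun ξ : ℝ => ρ / σ ^ 2 * (1 / 3 - (σ * ξ⁻¹) ^ 2
      - Real.sqrt π * (σ * ξ⁻¹) ^ 3)) atTop (nhds (ρ / (3 * σ ^ 2))) := by
    have hc : Continuous (fun x : ℝ => ρ / σ ^ 2 * (1 / 3 - x ^ 2 - Real.sqrt π * x ^ 3)) := by
      fun_prop
    have := (hc.tendsto 0).comp hi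
    have e : ρ / (3 * σ ^ 2) = ρ / σ ^ 2 * (1 / 3 - 0 ^ 2 - Real.sqrt π * 0 ^ 3) := by
      field_simp
      ring
    rw [e]
    exact this
  refine tendsto_of_tendsto_of_tendsto_of_le_of_le' hL hU ?_ ?_
  · filter_upwards [eventually_gt_atTop 0] with ξ hξ
    rw [le_div_iff₀ (by positivity)]
    have hT : σ * (ξ / σ) = ξ := by field_simp
    have hb : BddAbove (Set.range fun l : ℝ => l * ξ - mq ρ σ l) := by
      refine ⟨ρ * σ * (((ξ / σ + 1) ^ 3 - 1) / 3 - Real.log (1 / (2 * Real.sqrt π)) * (ξ / σ)), ?_⟩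
      · rintro _ ⟨l, rfl⟩
        have := ub ρ σ hρ hσ (ξ / σ) (by positivity) l
        rw [hT] at this
        exact this
    refine le_trans ?_ (le_ciSup hb (ρ * (ξ / σ) ^ 2))
    have h := mul_le_mul_of_nonneg_left (upper (ξ / σ) (by positivity)) (mul_pos hρ hσ).le
    have e : ρ * (ξ / σ) ^ 2 / (2 * ρ) = (ξ / σ) ^ 2 / 2 := by field_simp
    simp only [mq]
    rw [e]
    refine le_trans (le_of_eq ?_) (sub_le_sub_left h _)
    field_simp
    ring
  · filter_upwards [eventually_gt_atTop 0] with ξ hξ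
    rw [div_le_iff₀ (by positivity)]
    have hT : σ * (ξ / σ) = ξ := by field_simp
    refine ciSup_le fun l => ?_
    have := ub ρ σ hρ hσ (ξ / σ) (by positivity) l
    rw [hT] at this
    refine this.trans (le_of_eq ?_)
    rw [← hK]
    field_simp
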